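/- Let 0<s<1 and let Ω satisfy (H). Let ψ:ℝ→[0,∞) be continuous with compact support, ∫_ℝ ψ(t) dt = 1, and C¹ on a neighborhood of 0, and let ρ be the pushforward of the measure ψ(t)dt under t↦(0,t)∈ℝ². Then there exist C>0 and ε₀>0 such that for all 0<ε<ε₀, | (W*ρ)(ε,0) − (W*ρ)(0,0) − (1/(2·τ_{2−s}))·Ω̃(0)·ψ(0)·ε^{1−s} | ≤ C·ε, where (W*ρ)(x)=∫ W(x−y) dρ(y). Moreover, if Ω attains a local minimum at π/2, the error bound C·ε can be improved to C·ε^{2−s}. -/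

import Mathlib

/-!
After rescaling `t = ε u`, the integrand of `(W * ρ)(ε, 0) - (W * ρ)(0, 0)` is
`ψ(t) (ε^{-s} F(t/ε) + ε²)`, where
`F(u) = (1+u²)^{-s/2} Ω(arctan(-u)) - |u|^{-s} Ω(π/2)` is the profile `prof`. Hence the leading
coefficient is `∫ F`, and the error equals `ε^{-s} ∫ (ψ(t) - ψ(0)) F(t/ε) dt + ε²` (`error_eq`).

*Value of `∫ F`* (`integral_prof`). Write
`F = ((1+u²)^{-s/2} - |u|^{-s}) Ω(π/2) + (1+u²)^{-s/2} (Ω(arctan(-u)) - Ω(π/2))`. The substitution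
`u = -tan θ` turns the second part into half of the integral defining `Ω̃(0)`. For the first part,
integrating the derivative of `u ((1+u²)^{-s/2} - u^{-s})` reduces it to `∫ (1+u²)^{-(s/2+1)} du`,
which is a quotient of Gamma values; the reflection and duplication formulas identify the result
with `c_s / (2 τ_{2-s})`.

*Error bounds.* Let `k(u) = min(|u|^{-s}, |u|^{-s-1})`, an integrable function. Since `Ω` is
Lipschitz and `arctan(-u)` is within `1/|u|` of `π/2` modulo `π`, one has `|F| ≤ A k`; and
`|ψ(t) - ψ(0)| ≤ L min(1, |t|)`, so the error integrand is at most `L A ε^{s+1} k(t)`, which gives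
`O(ε)`. If `π/2` is a local minimum of `Ω`, then `Ω'(π/2) = 0`, so `Ω - Ω(π/2)` vanishes to second
order there and `|u| |F(u)| ≤ A k(u)`. The error integrand is then at most `L A ε k(t/ε)`, whose
integral is of order `ε²`, and the bound is `O(ε^{2-s})`.
-/


open MeasureTheory Real Filter Set Topology
open scoped ENNReal

noncomputable section

namespace Aniso

/-- The Euclidean norm on `ℝ × ℝ`. -/
def nrm (x : ℝ × ℝ) : ℝ := Real.sqrt (x.1 ^ 2 + x.2 ^ 2)

/-- The angle `θ(x) ∈ [-π, π)` of a nonzero point `x ∈ ℝ²`,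
so that `x / |x| = (cos (ang x), sin (ang x))`. -/
def ang (x : ℝ × ℝ) : ℝ :=
  if Complex.arg ⟨x.1, x.2⟩ = π then -π else Complex.arg ⟨x.1, x.2⟩

/-- The unit vector `e_φ = (cos φ, sin φ)`. -/
def eVec (φ : ℝ) : ℝ × ℝ := (Real.cos φ, Real.sin φ)

/-- The constant `τ_s = (2π)^{-s} Γ(s) cos(sπ/2)`. -/
def tauC (s : ℝ) : ℝ := (2 * π) ^ (-s) * Real.Gamma s * Real.cos (s * π / 2)

/-- The constant `c_s = π^{s-1} Γ((2-s)/2) / Γ(s/2)`. -/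
def cC (s : ℝ) : ℝ := π ^ (s - 1) * Real.Gamma ((2 - s) / 2) / Real.Gamma (s / 2)

/-- Hypothesis (H): `Ω` is smooth, 2π-periodic, strictly positive and π-periodic. -/
def SatisfiesH (Ω : ℝ → ℝ) : Prop :=
  ContDiff ℝ (⊤ : ℕ∞) Ω ∧ (∀ θ, Ω (θ + 2 * π) = Ω θ) ∧ (∀ θ, 0 < Ω θ) ∧ ∀ θ, Ω (θ + π) = Ω θ

/-- Hypothesis (h): `ω` is smooth, 2π-periodic, nonnegative, not identically zero,
π-periodic, and `ω(π/2) = 0`. -/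
def Satisfiesh (ω : ℝ → ℝ) : Prop :=
  ContDiff ℝ (⊤ : ℕ∞) ω ∧ (∀ θ, ω (θ + 2 * π) = ω θ) ∧ (∀ θ, 0 ≤ ω θ) ∧ (∃ θ, ω θ ≠ 0) ∧
    (∀ θ, ω (θ + π) = ω θ) ∧ ω (π / 2) = 0

/-- The transformed angle function `Ω̃`. -/
def Omt (s : ℝ) (Ω : ℝ → ℝ) (φ : ℝ) : ℝ :=
  tauC (2 - s) * (∫ θ in (-π)..π, |Real.cos (φ - θ)| ^ (-2 + s) * (Ω θ - Ω (φ + π / 2)))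
    + cC s * Ω (φ + π / 2)

/-- The interaction potential `W(x) = |x|^{-s} Ω(θ(x)) + |x|²` as an `[0,∞]`-valued
kernel, with `W(0) = ∞`. -/
def Wkernel (s : ℝ) (Ω : ℝ → ℝ) (x : ℝ × ℝ) : ℝ≥0∞ :=
  if x = 0 then ⊤ else ENNReal.ofReal (nrm x ^ (-s) * Ω (ang x) + nrm x ^ 2)

/-- The interaction energy `E[ρ] = (1/2) ∬ W(x-y) dρ(y) dρ(x) ∈ [0,∞]`. -/
def energy (s : ℝ) (Ω : ℝ → ℝ) (ρ : Measure (ℝ × ℝ)) : ℝ≥0∞ :=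
  (1 / 2 : ℝ≥0∞) * ∫⁻ x, ∫⁻ y, Wkernel s Ω (x - y) ∂ρ ∂ρ

/-- The real-valued interaction potential (with junk value `0` at the origin,
which is Lebesgue negligible). -/
def Wr (s : ℝ) (Ω : ℝ → ℝ) (x : ℝ × ℝ) : ℝ := nrm x ^ (-s) * Ω (ang x) + nrm x ^ 2

/-- `ρ` minimizes the energy `E` among probability measures on `ℝ²`. -/
def IsMinimizer (E : Measure (ℝ × ℝ) → ℝ≥0∞) (ρ : Measure (ℝ × ℝ)) : Prop :=
  IsProbabilityMeasure ρ ∧ ∀ μ : Measure (ℝ × ℝ), IsProbabilityMeasure μ → E ρ ≤ E μ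

/-- `ρ` is the unique minimizer of `E` up to translation: it is a minimizer and every
minimizer is a translate of it. -/
def IsUniqueMinimizer (E : Measure (ℝ × ℝ) → ℝ≥0∞) (ρ : Measure (ℝ × ℝ)) : Prop :=
  IsMinimizer E ρ ∧ ∀ μ, IsMinimizer E μ → ∃ v : ℝ × ℝ, μ = Measure.map (fun x => x + v) ρ

def R2 (s : ℝ) : ℝ := (8 * Real.sin (s * π / 2) / (s ^ 2 * (2 + s) * π)) ^ (-(1 / (s + 2)))

def C2 (s : ℝ) : ℝ := 4 * Real.sin (s * π / 2) / (s ^ 2 * π ^ 2)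

/-- The density `ρ₂(x) = C₂ (R₂² - |x|²)₊^{s/2}`. -/
def rho2 (s : ℝ) (x : ℝ × ℝ) : ℝ := C2 s * (max (R2 s ^ 2 - nrm x ^ 2) 0) ^ (s / 2)

def rho2meas (s : ℝ) : Measure (ℝ × ℝ) := volume.withDensity fun x => ENNReal.ofReal (rho2 s x)

/-- Counterclockwise rotation of `ℝ²` by the angle `η`. -/
def Rot (η : ℝ) (x : ℝ × ℝ) : ℝ × ℝ :=
  (x.1 * Real.cos η - x.2 * Real.sin η, x.1 * Real.sin η + x.2 * Real.cos η)

/-- The measure `ρ_{a,b,η}`: the pushforward of `ρ₂(x) dx` under `x ↦ R_η (a x₁, b x₂)`. -/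
def rhoE (s a b η : ℝ) : Measure (ℝ × ℝ) :=
  Measure.map (fun x => Rot η (a * x.1, b * x.2)) (rho2meas s)

/-- The measure `ρ_{a,b} = ρ_{a,b,0}`. -/
def rhoAB (s a b : ℝ) : Measure (ℝ × ℝ) := rhoE s a b 0

/-- The Beta function. -/
def BetaR (x y : ℝ) : ℝ := Real.Gamma x * Real.Gamma y / Real.Gamma (x + y)

def C1 (s : ℝ) : ℝ := 2 * Real.cos (s * π / 2) / (s * (s + 1) * π)

def R1 (s : ℝ) : ℝ := (C1 s * BetaR (1 / 2) ((3 + s) / 2)) ^ (-(1 / (s + 2)))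

/-- The density `ρ₁(t) = C₁ (R₁² - t²)₊^{(1+s)/2}` on `ℝ`. -/
def rho1 (s t : ℝ) : ℝ := C1 s * (max (R1 s ^ 2 - t ^ 2) 0) ^ ((1 + s) / 2)

def rho1meas (s : ℝ) : Measure ℝ := volume.withDensity fun t => ENNReal.ofReal (rho1 s t)

/-- The measure `ρ_{1D}`: the pushforward of `ρ₁(t) dt` under `t ↦ (0, t)`. -/
def rho1D (s : ℝ) : Measure (ℝ × ℝ) := Measure.map (fun t : ℝ => ((0 : ℝ), t)) (rho1meas s)

/-- The support of a measure: points all of whose neighborhoods have positive measure. -/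
def msupport {α : Type*} [TopologicalSpace α] [MeasurableSpace α] (μ : Measure α) : Set α :=
  {x | ∀ U ∈ 𝓝 x, 0 < μ U}

def Acoef (s : ℝ) (Ω : ℝ → ℝ) (a b : ℝ) : ℝ :=
  tauC s * (R1 s / R2 s) ^ (2 + s) *
    ∫ φ in (-π)..π,
      (a ^ 2 * Real.cos φ ^ 2 + b ^ 2 * Real.sin φ ^ 2) ^ (-(2 + s) / 2) *
        Real.cos φ ^ 2 * Omt s Ω φ

def Bcoef (s : ℝ) (Ω : ℝ → ℝ) (a b : ℝ) : ℝ :=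
  tauC s * (R1 s / R2 s) ^ (2 + s) *
    ∫ φ in (-π)..π,
      (a ^ 2 * Real.cos φ ^ 2 + b ^ 2 * Real.sin φ ^ 2) ^ (-(2 + s) / 2) *
        Real.sin φ ^ 2 * Omt s Ω φ

def Dcoef (s : ℝ) (Ω : ℝ → ℝ) (a b : ℝ) : ℝ :=
  tauC s * (R1 s / R2 s) ^ (2 + s) *
    ∫ φ in (-π)..π,
      (a ^ 2 * Real.cos φ ^ 2 + b ^ 2 * Real.sin φ ^ 2) ^ (-(2 + s) / 2) *
        (Real.cos φ * Real.sin φ) * Omt s Ω φ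

def Mfun (s : ℝ) (Ω : ℝ → ℝ) (a b : ℝ) : ℝ :=
  tauC s * (R1 s / R2 s) ^ (2 + s) *
    ∫ φ in (-π)..π, (a ^ 2 * Real.cos φ ^ 2 + b ^ 2 * Real.sin φ ^ 2) ^ (-s / 2) * Omt s Ω φ

def calE (s : ℝ) (Ω : ℝ → ℝ) (a b : ℝ) : ℝ := Mfun s Ω a b + s / 2 * (a ^ 2 + b ^ 2)

/-- A measure has compact support. -/
def HasCompactSupportM (ρ : Measure (ℝ × ℝ)) : Prop :=
  ∃ K : Set (ℝ × ℝ), IsCompact K ∧ ρ Kᶜ = 0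

/-- The linear interpolation `(1-t) ρ₀ + t ρ₁`. -/
def mix (ρ₀ ρ₁ : Measure (ℝ × ℝ)) (t : ℝ) : Measure (ℝ × ℝ) :=
  ENNReal.ofReal (1 - t) • ρ₀ + ENNReal.ofReal t • ρ₁

/-- Linear interpolation convexity (LIC): for any two distinct compactly supported
probability measures of finite energy with the same center of mass, the energy is
strictly convex along their linear interpolation. -/
def LIC (s : ℝ) (Ω : ℝ → ℝ) : Prop :=
  ∀ ρ₀ ρ₁ : Measure (ℝ × ℝ), IsProbabilityMeasure ρ₀ → IsProbabilityMeasure ρ₁ →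
    HasCompactSupportM ρ₀ → HasCompactSupportM ρ₁ →
    energy s Ω ρ₀ < ⊤ → energy s Ω ρ₁ < ⊤ → ρ₀ ≠ ρ₁ →
    (∫ x, x ∂ρ₀) = (∫ x, x ∂ρ₁) →
    StrictConvexOn ℝ (Set.Icc (0 : ℝ) 1) fun t => (energy s Ω (mix ρ₀ ρ₁ t)).toReal

/-- The interaction energy of a bounded compactly supported signed density. -/
def energyR (s : ℝ) (Ω : ℝ → ℝ) (μ : ℝ × ℝ → ℝ) : ℝ :=
  (1 / 2) * ∫ x : ℝ × ℝ, (∫ y : ℝ × ℝ, Wr s Ω (x - y) * μ y) * μ x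

/-- The logarithmic potential `W_log(x) = -ln|x| + Ω(θ(x)) + |x|²` (real valued,
with junk value at the origin). -/
def Wlog (Ω : ℝ → ℝ) (x : ℝ × ℝ) : ℝ := -Real.log (nrm x) + Ω (ang x) + nrm x ^ 2

def WlogKernel (Ω : ℝ → ℝ) (x : ℝ × ℝ) : ℝ≥0∞ :=
  if x = 0 then ⊤ else ENNReal.ofReal (Wlog Ω x)

/-- The logarithmic interaction energy. -/
def energyLog (Ω : ℝ → ℝ) (ρ : Measure (ℝ × ℝ)) : ℝ≥0∞ :=
  (1 / 2 : ℝ≥0∞) * ∫⁻ x, ∫⁻ y, WlogKernel Ω (x - y) ∂ρ ∂ρ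

/-- The family `W_{(s)}(x) = |x|^{-s} (1/s + Ω(θ(x))) - 1/s + |x|²`. -/
def Wsfam (s : ℝ) (Ω : ℝ → ℝ) (x : ℝ × ℝ) : ℝ :=
  nrm x ^ (-s) * (1 / s + Ω (ang x)) - 1 / s + nrm x ^ 2

/-- The transformed angle function of `W_{(s)}`. -/
def Omts (s : ℝ) (Ω : ℝ → ℝ) (φ : ℝ) : ℝ :=
  tauC (2 - s) * (∫ θ in (-π)..π, |Real.cos (φ - θ)| ^ (-2 + s) * (Ω θ - Ω (φ + π / 2)))
    + cC s * (1 / s + Ω (φ + π / 2))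

/-- The truncated integral appearing in the principal value defining `Ω̃_log`. -/
def pvInt (Ω : ℝ → ℝ) (φ δ : ℝ) : ℝ :=
  ∫ θ in {θ : ℝ | θ ∈ Set.Icc (-π) π ∧ δ ≤ |Real.cos (φ - θ)|},
    |Real.cos (φ - θ)| ^ (-(2 : ℝ)) * (Ω θ - Ω (φ + π / 2))

def OmtLogFam (Ω : ℝ → ℝ) (φ δ : ℝ) : ℝ :=
  -((2 * π) ^ (-(2 : ℝ))) * pvInt Ω φ δ + (2 * π)⁻¹

/-- The transformed angle function `Ω̃_log`, defined as the principal value limit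
(via `limUnder`, which returns the limit whenever it exists). -/
def OmtLog (Ω : ℝ → ℝ) (φ : ℝ) : ℝ := limUnder (𝓝[>] (0 : ℝ)) (OmtLogFam Ω φ)

/-- The closed elliptical region `B(0; a, b)`. -/
def ellipseSet (a b : ℝ) : Set (ℝ × ℝ) := {x | x.1 ^ 2 / a ^ 2 + x.2 ^ 2 / b ^ 2 ≤ 1}

def ALog (Ω : ℝ → ℝ) (a b : ℝ) : ℝ :=
  ∫ φ in (-π)..π,
    (a ^ 2 * Real.cos φ ^ 2 + b ^ 2 * Real.sin φ ^ 2)⁻¹ * Real.cos φ ^ 2 * OmtLog Ω φ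

def BLog (Ω : ℝ → ℝ) (a b : ℝ) : ℝ :=
  ∫ φ in (-π)..π,
    (a ^ 2 * Real.cos φ ^ 2 + b ^ 2 * Real.sin φ ^ 2)⁻¹ * Real.sin φ ^ 2 * OmtLog Ω φ

def DLog (Ω : ℝ → ℝ) (a b : ℝ) : ℝ :=
  ∫ φ in (-π)..π,
    (a ^ 2 * Real.cos φ ^ 2 + b ^ 2 * Real.sin φ ^ 2)⁻¹ *
      (Real.cos φ * Real.sin φ) * OmtLog Ω φ

/-- The uniform probability measure on the rotated ellipse `B(0; a, b, η)`. -/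
def unifEllipse (a b η : ℝ) : Measure (ℝ × ℝ) :=
  volume.withDensity ((Rot η '' ellipseSet a b).indicator fun _ => ENNReal.ofReal ((π * a * b)⁻¹))

/-- The pushforward of the density `(2/(πb²)) (b² - t²)₊^{1/2} dt` under `t ↦ R_η (0, t)`. -/
def semicirc (b η : ℝ) : Measure (ℝ × ℝ) :=
  Measure.map (fun t : ℝ => Rot η (0, t))
    (volume.withDensity fun t =>
      ENNReal.ofReal (2 / (π * b ^ 2) * (max (b ^ 2 - t ^ 2) 0) ^ ((1 : ℝ) / 2)))

/-- The vertical semicircle measure `ρ_{1D}` for the logarithmic case. -/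
def rho1Dlog : Measure (ℝ × ℝ) :=
  Measure.map (fun t : ℝ => ((0 : ℝ), t))
    (volume.withDensity fun t => ENNReal.ofReal (2 / π * (max (1 - t ^ 2) 0) ^ ((1 : ℝ) / 2)))

/-- The measure `ψ(t) dt` placed on the vertical axis. -/
def rhoPsi (ψ : ℝ → ℝ) : Measure (ℝ × ℝ) :=
  Measure.map (fun t : ℝ => ((0 : ℝ), t)) (volume.withDensity fun t => ENNReal.ofReal (ψ t))


/-! ### The integrable majorant and the radial part of the profile -/

/-- The majorant `k(u) = min(|u|^{-s}, |u|^{-s-1})`. It is integrable for `0 < s < 1`: the first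
entry controls the origin and the second one infinity. -/
def ker (s u : ℝ) : ℝ := min (|u| ^ (-s)) (|u| ^ (-s - 1))

lemma integrable_of_comp_abs {f : ℝ → ℝ} (hf : IntegrableOn (fun x => f |x|) (Ioi 0)) :
    Integrable fun x => f |x| := by
  rw [← integrableOn_univ, ← Iic_union_Ioi (a := (0 : ℝ)), integrableOn_union]
  refine ⟨?_, hf⟩
  rw [integrableOn_Iic_iff_integrableOn_Iio]
  have := hf.comp_neg
  simpa using this

lemma ker_nonneg (s u : ℝ) : 0 ≤ ker s u := by unfold ker; positivity

lemma ker_le_left (s u : ℝ) : ker s u ≤ |u| ^ (-s) := min_le_left _ _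

lemma ker_measurable (s : ℝ) : Measurable (ker s) := by unfold ker; fun_prop

lemma ker_integrable {s : ℝ} (hs0 : 0 < s) (hs1 : s < 1) : Integrable (ker s) := by
  have : ker s = fun u => (fun r => min (r ^ (-s)) (r ^ (-s - 1))) |u| := rfl
  rw [this]
  apply integrable_of_comp_abs (f := fun r => min (r ^ (-s)) (r ^ (-s - 1)))
  rw [← Ioc_union_Ioi_eq_Ioi zero_le_one, integrableOn_union]
  constructor
  · have h := (intervalIntegral.intervalIntegrable_rpow' (a := 0) (b := 1) (r := -s) (by linarith)).1
    refine Integrable.mono' h (by fun_prop) ?_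
    filter_upwards [ae_restrict_mem measurableSet_Ioc] with u hu
    rw [Real.norm_eq_abs, abs_of_nonneg (by positivity), abs_of_pos hu.1]
    exact min_le_left _ _
  · have h := integrableOn_Ioi_rpow_of_lt (a := -s - 1) (by linarith) one_pos
    refine Integrable.mono' h (by fun_prop) ?_
    filter_upwards [ae_restrict_mem measurableSet_Ioi] with u hu
    have hu' : (0 : ℝ) < u := one_pos.trans hu
    rw [Real.norm_eq_abs, abs_of_nonneg (by positivity), abs_of_pos hu']
    exact min_le_right _ _

lemma bracket_eq {s u : ℝ} (hu : u ≠ 0) :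
    (1 + u ^ 2) ^ (-s / 2) = |u| ^ (-s) * (1 + (|u| ^ 2)⁻¹) ^ (-s / 2) := by
  have h : 0 < |u| := abs_pos.2 hu
  have : |u| ^ (-s) = (|u| ^ 2) ^ (-s / 2) := by
    rw [← rpow_natCast, ← rpow_mul h.le]; congr 1; push_cast; ring
  rw [this, ← mul_rpow (by positivity) (by positivity), mul_add, mul_inv_cancel₀ (by positivity),
    sq_abs]
  ring_nf

lemma bracket_sub_nonneg {s u : ℝ} (hs0 : 0 < s) (hu : u ≠ 0) :
    0 ≤ |u| ^ (-s) - (1 + u ^ 2) ^ (-s / 2) := by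
  rw [bracket_eq hu]
  have h : 0 < |u| := abs_pos.2 hu
  have : (1 + (|u| ^ 2)⁻¹) ^ (-s / 2) ≤ 1 :=
    rpow_le_one_of_one_le_of_nonpos (by simp; positivity) (by linarith)
  nlinarith [rpow_nonneg h.le (-s)]

lemma bracket_sub_le {s u : ℝ} (hs0 : 0 < s) (hs1 : s < 1) (hu : u ≠ 0) :
    |u| ^ (-s) - (1 + u ^ 2) ^ (-s / 2) ≤ |u| ^ (-s) * (|u| ^ 2)⁻¹ := by
  have h : 0 < |u| := abs_pos.2 hu
  rw [bracket_eq hu]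
  set x := (|u| ^ 2)⁻¹
  have hx : 0 < x := by positivity
  have h1 : (1 + x) ^ (s / 2) ≤ 1 + s / 2 * x :=
    rpow_one_add_le_one_add_mul_self (by linarith) (by linarith) (by linarith)
  have h2 : 1 - x ≤ (1 + x) ^ (-s / 2) := by
    rw [neg_div, rpow_neg (by positivity)]
    calc 1 - x ≤ (1 + x)⁻¹ := by
          rw [inv_eq_one_div, le_div_iff₀ (by positivity)]; nlinarith
      _ ≤ ((1 + x) ^ (s / 2))⁻¹ := by
          apply inv_anti₀ (by positivity)
          nlinarith
  nlinarith [rpow_nonneg h.le (-s)]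

lemma bracket_sub_le_ker {s u : ℝ} (hs0 : 0 < s) (hs1 : s < 1) (hu : u ≠ 0) :
    |u| ^ (-s) - (1 + u ^ 2) ^ (-s / 2) ≤ ker s u := by
  have h : 0 < |u| := abs_pos.2 hu
  have hp : 0 ≤ (1 + u ^ 2) ^ (-s / 2) := by positivity
  refine le_min (by linarith) ?_
  have h3 := bracket_sub_le hs0 hs1 hu
  rw [rpow_sub_one h.ne']
  rcases le_total |u| 1 with h1 | h1
  · have : |u| ^ (-s) ≤ |u| ^ (-s) / |u| := by
      rw [le_div_iff₀ h]; nlinarith [rpow_nonneg h.le (-s)]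
    linarith
  · refine h3.trans ?_
    rw [div_eq_mul_inv]
    gcongr
    nlinarith

lemma bracket_integrable {s : ℝ} (hs0 : 0 < s) (hs1 : s < 1) :
    Integrable fun u : ℝ => (1 + u ^ 2) ^ (-s / 2) - |u| ^ (-s) := by
  refine (ker_integrable hs0 hs1).mono' (by fun_prop) ?_
  have : ∀ᵐ u : ℝ, u ≠ 0 := by simp [ae_iff]
  filter_upwards [this] with u hu
  rw [norm_sub_rev, norm_eq_abs, abs_of_nonneg (bracket_sub_nonneg hs0 hu)]
  exact bracket_sub_le_ker hs0 hs1 hu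

/-! ### The integral of the radial part -/

/-- Follows by writing `Γ(b) (1+u²)^{-b} = ∫_0^∞ x^{b-1} e^{-x(1+u²)} dx`, exchanging the integrals
and evaluating the Gaussian integral in `u`. -/
lemma integral_bracket {b : ℝ} (hb : 1 / 2 < b) :
    Integrable (fun u : ℝ => (1 + u ^ 2) ^ (-b)) ∧
    ∫ u : ℝ, (1 + u ^ 2) ^ (-b) = √π * Gamma (b - 1 / 2) / Gamma b := by
  have hb0 : 0 < b := by linarith
  set f : ℝ → ℝ → ℝ := fun x u => x ^ (b - 1) * exp (-((1 + u ^ 2) * x)) with hf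
  have hx : ∀ x ∈ Ioi (0 : ℝ), Integrable (f x) ∧
      ∫ u, f x u = √π * (x ^ (b - 1 / 2 - 1) * exp (-(1 * x))) := by
    intro x hx
    rw [mem_Ioi] at hx
    have e : f x = fun u => (x ^ (b - 1) * exp (-x)) * exp (-x * u ^ 2) := by
      ext u; simp only [hf]; rw [mul_assoc, ← exp_add]; ring_nf
    rw [e]
    refine ⟨(integrable_exp_neg_mul_sq hx).const_mul _, ?_⟩
    rw [integral_const_mul, integral_gaussian, Real.sqrt_div pi_pos.le, sqrt_eq_rpow x,
      show b - 1 / 2 - 1 = (b - 1) - 1 / 2 by ring, rpow_sub hx (b - 1), one_mul]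
    field_simp
  have hu : ∀ u : ℝ, ∫ x in Ioi 0, f x u = (1 + u ^ 2) ^ (-b) * Gamma b := by
    intro u
    simp only [hf]
    rw [integral_rpow_mul_exp_neg_mul_Ioi hb0 (by positivity), one_div, inv_rpow (by positivity),
      rpow_neg (by positivity)]
  have hI : Integrable (Function.uncurry f) ((volume.restrict (Ioi 0)).prod volume) := by
    rw [integrable_prod_iff]
    · constructor
      · filter_upwards [ae_restrict_mem measurableSet_Ioi] with x h
        exact (hx x h).1
      · have : IntegrableOn (fun x : ℝ => √π * (exp (-x) * x ^ (b - 1 / 2 - 1))) (Ioi 0) :=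
          (GammaIntegral_convergent (by linarith)).const_mul _
        refine this.congr ?_
        filter_upwards [ae_restrict_mem measurableSet_Ioi] with x h
        have : ∀ u, ‖f x u‖ = f x u := fun u => by
          rw [norm_eq_abs, abs_of_nonneg]
          have : 0 < x := h
          simp only [hf]; positivity
        simp only [Function.uncurry, this, (hx x h).2, one_mul]
        ring
    · apply Measurable.aestronglyMeasurable
      simp only [hf, Function.uncurry_def]
      fun_prop
  have hG := Gamma_pos_of_pos hb0
  constructor
  · have := hI.integral_prod_right
    simp only [Function.uncurry, hu] at this
    simpa [mul_assoc, hG.ne'] using this.mul_const (Gamma b)⁻¹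
  · have := integral_integral_swap hI
    simp only [hu] at this
    rw [integral_mul_const, setIntegral_congr_fun measurableSet_Ioi (fun x h => (hx x h).2),
      integral_const_mul, integral_rpow_mul_exp_neg_mul_Ioi (by linarith) one_pos] at this
    rw [eq_div_iff hG.ne', ← this]
    simp

/-- On `u > 0`, the derivative of `G(u) = u ((1+u²)^{-s/2} - u^{-s})` is
`(1-s) ((1+u²)^{-s/2} - u^{-s}) + s (1+u²)^{-(s/2+1)}`, and `G` vanishes at both `0` and `∞`. -/
lemma integral_bracket_sub {s : ℝ} (hs0 : 0 < s) (hs1 : s < 1) :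
    (1 - s) * ∫ u : ℝ, ((1 + u ^ 2) ^ (-s / 2) - |u| ^ (-s))
      = - s * ∫ u : ℝ, (1 + u ^ 2) ^ (-(s / 2 + 1)) := by
  have hb := (integral_bracket (b := s / 2 + 1) (by linarith)).1
  have hk := bracket_integrable hs0 hs1
  set g : ℝ → ℝ := fun u => (1 - s) * ((1 + u ^ 2) ^ (-s / 2) - |u| ^ (-s)) +
    s * (1 + u ^ 2) ^ (-(s / 2 + 1)) with hg
  have hgi : Integrable g := (hk.const_mul _).add (hb.const_mul _)
  have habs : ∀ u, g |u| = g u := fun u => by simp [hg]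
  set G : ℝ → ℝ := fun u => u * ((1 + u ^ 2) ^ (-s / 2)) - u ^ (1 - s) with hG
  have key : ∫ u in Ioi (0 : ℝ), g u = 0 - G 0 := by
    apply integral_Ioi_of_hasDerivAt_of_tendsto (f := G)
    · apply Continuous.continuousWithinAt
      have h1 : Continuous fun u : ℝ => (1 + u ^ 2) ^ (-s / 2) :=
        Continuous.rpow_const (by fun_prop) (fun u => Or.inl (by positivity))
      have h2 : Continuous fun u : ℝ => u ^ (1 - s) :=
        Continuous.rpow_const (by fun_prop) (fun u => Or.inr (by linarith))
      exact (continuous_id.mul h1).sub h2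
    · intro u hu
      have hu : 0 < u := hu
      have h1 : HasDerivAt (fun u : ℝ => (1 + u ^ 2) ^ (-s / 2))
          ((2 * u) * (-s / 2) * (1 + u ^ 2) ^ (-s / 2 - 1)) u := by
        apply HasDerivAt.rpow_const
        · simpa using ((hasDerivAt_pow 2 u).const_add 1)
        · left; positivity
      have h2 := (hasDerivAt_rpow_const (x := u) (p := 1 - s) (Or.inl hu.ne'))
      have h3 := ((hasDerivAt_id u).mul h1).sub h2
      refine h3.congr_deriv ?_
      simp only [hg, abs_of_pos hu, id]
      have e1 : (1 + u ^ 2) ^ (-s / 2) = (1 + u ^ 2) * (1 + u ^ 2) ^ (-(s / 2 + 1)) := by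
        rw [← rpow_one_add' (by positivity) (by linarith)]; congr 1; ring
      rw [e1, show -s / 2 - 1 = -(s / 2 + 1) by ring, show 1 - s - 1 = -s by ring]
      ring
    · exact hgi.integrableOn
    · have hlim : Tendsto (fun u : ℝ => u ^ (-(1 + s))) atTop (𝓝 0) :=
        tendsto_rpow_neg_atTop (by linarith)
      refine squeeze_zero_norm' ?_ hlim
      filter_upwards [eventually_gt_atTop 0] with u hu
      have a1 := bracket_sub_nonneg hs0 hu.ne'
      have a2 := bracket_sub_le hs0 hs1 hu.ne'
      rw [abs_of_pos hu] at a1 a2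
      have e : G u = - (u * (u ^ (-s) - (1 + u ^ 2) ^ (-s / 2))) := by
        simp only [hG]
        rw [show 1 - s = 1 + -s by ring, rpow_add hu, rpow_one]; ring
      rw [e, norm_neg, norm_eq_abs, abs_of_nonneg (by positivity)]
      calc _ ≤ u * (u ^ (-s) * (u ^ 2)⁻¹) := by gcongr
        _ = _ := by
          rw [show -(1 + s) = -s - 1 by ring, rpow_sub_one hu.ne']
          field_simp
  have h0 : G 0 = 0 := by simp [hG, show 1 - s ≠ 0 by linarith]
  have hz : ∫ u, g u = 0 := by
    have := integral_comp_abs (f := g)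
    simp only [habs] at this
    rw [this, key, h0]; simp
  rw [hg, integral_add (hk.const_mul _) (hb.const_mul _), integral_const_mul,
    integral_const_mul] at hz
  linarith

lemma integral_bracket_sub_eq {s : ℝ} (hs0 : 0 < s) (hs1 : s < 1) :
    ∫ u : ℝ, ((1 + u ^ 2) ^ (-s / 2) - |u| ^ (-s)) = cC s / (2 * tauC (2 - s)) := by
  have h := integral_bracket_sub hs0 hs1
  rw [(integral_bracket (b := s / 2 + 1) (by linarith)).2] at h
  have hs : (1 - s) ≠ 0 := by linarith
  -- reflection (`g3`) and duplication (`g4`) reduce everything to `Γ(s/2)`, `Γ((1-s)/2)`, `Γ(2-s)`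
  have g1 : Gamma (s / 2 + 1) = s / 2 * Gamma (s / 2) := Gamma_add_one (by linarith)
  have g2 : Gamma ((1 - s) / 2 + 1) = (1 - s) / 2 * Gamma ((1 - s) / 2) :=
    Gamma_add_one (by linarith)
  have g3 := Real.Gamma_mul_Gamma_one_sub ((1 + s) / 2)
  have g4 := Real.Gamma_mul_Gamma_add_half ((2 - s) / 2)
  rw [show π * ((1 + s) / 2) = s * π / 2 + π / 2 by ring, sin_add_pi_div_two,
    show 1 - (1 + s) / 2 = (1 - s) / 2 by ring] at g3
  rw [show (2 - s) / 2 + 1 / 2 = (1 - s) / 2 + 1 by ring, g2,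
    show 2 * ((2 - s) / 2) = 2 - s by ring, show 1 - (2 - s) = s - 1 by ring] at g4
  rw [g1, show s / 2 + 1 - 1 / 2 = (1 + s) / 2 by ring] at h
  have p1 : 0 < Gamma (s / 2) := Gamma_pos_of_pos (by linarith)
  have p2 : 0 < Gamma ((1 - s) / 2) := Gamma_pos_of_pos (by linarith)
  have p3 : 0 < Gamma ((2 - s) / 2) := Gamma_pos_of_pos (by linarith)
  have p4 : 0 < Gamma (2 - s) := Gamma_pos_of_pos (by linarith)
  have p5 : 0 < cos (s * π / 2) := cos_pos_of_mem_Ioo ⟨by nlinarith [pi_pos], by nlinarith [pi_pos]⟩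
  have hc : cos ((2 - s) * π / 2) = - cos (s * π / 2) := by
    rw [show (2 - s) * π / 2 = π - s * π / 2 by ring, cos_pi_sub]
  have q1 : (2 : ℝ) ^ (-(2 - s)) = 2 ^ (s - 1) / 2 := by
    rw [show -(2 - s) = s - 1 - 1 by ring, rpow_sub_one two_ne_zero]
  have q2 : π ^ (-(2 - s)) = π ^ (s - 1) / π := by
    rw [show -(2 - s) = s - 1 - 1 by ring, rpow_sub_one pi_ne_zero]
  unfold cC tauC
  rw [hc, mul_rpow zero_le_two pi_pos.le, q1, q2]
  have r1 : (0 : ℝ) < 2 ^ (s - 1) := by positivity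
  have r2 : (0 : ℝ) < π ^ (s - 1) := by positivity
  have r3 : (0 : ℝ) < √π := by positivity
  have r4 : √π * √π = π := mul_self_sqrt pi_pos.le
  generalize (∫ u : ℝ, ((1 + u ^ 2) ^ (-s / 2) - |u| ^ (-s))) = I at *
  generalize (2 : ℝ) ^ (s - 1) = A at *
  generalize (π : ℝ) ^ (s - 1) = B at *
  generalize Gamma (s / 2) = a at *
  generalize Gamma ((1 - s) / 2) = b at *
  generalize Gamma ((2 - s) / 2) = c at *
  generalize Gamma (2 - s) = d at *
  generalize Gamma ((1 + s) / 2) = e at *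
  generalize cos (s * π / 2) = f at *
  generalize √π = R at *
  have e1 : e = π / f / b := by field_simp at g3 ⊢; linarith
  have e2 : c = d * A * R / ((1 - s) / 2 * b) := by field_simp at g4 ⊢; linarith
  have e3 : I = -s * (R * e / (s / 2 * a)) / (1 - s) := by field_simp at h ⊢; linarith
  rw [e3, e2, e1]
  field_simp
  try ring

/-! ### The profile and its decay -/

/-- The rescaled difference of potentials: `F(u) = (1+u²)^{-s/2} Ω(arctan(-u)) - |u|^{-s} Ω(π/2)`
is `|x|^{-s} Ω(θ(x))` at `x = (1, -u)` minus its value at `x = (0, -u)`. -/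
def prof (s : ℝ) (Ω : ℝ → ℝ) (u : ℝ) : ℝ :=
  (1 + u ^ 2) ^ (-s / 2) * Ω (arctan (-u)) - |u| ^ (-s) * Ω (π / 2)

lemma periodic_bdd {f : ℝ → ℝ} {T : ℝ} (hT : T ≠ 0) (hf : Continuous f)
    (hp : Function.Periodic f T) : ∃ M, 0 ≤ M ∧ ∀ x, |f x| ≤ M := by
  obtain ⟨M, hM⟩ := (hp.compact_of_continuous hT hf).isBounded.exists_norm_le
  exact ⟨M, (norm_nonneg _).trans (hM _ ⟨0, rfl⟩), fun x => hM _ ⟨x, rfl⟩⟩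

lemma periodic_deriv {f : ℝ → ℝ} {T : ℝ} (hp : Function.Periodic f T) :
    Function.Periodic (deriv f) T := by
  intro x
  rw [← deriv_comp_add_const, funext hp]

lemma Om_lip {Ω : ℝ → ℝ} (hΩ : SatisfiesH Ω) :
    ∃ K, 0 ≤ K ∧ ∀ θ, |Ω θ - Ω (π / 2)| ≤ K * |θ - π / 2| := by
  obtain ⟨hc, -, -, hp⟩ := hΩ
  have hd : Differentiable ℝ Ω := hc.differentiable (by simp)
  obtain ⟨K, hK0, hK⟩ := periodic_bdd pi_ne_zero (hc.continuous_deriv (by simp))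
    (periodic_deriv hp)
  exact ⟨K, hK0, fun θ => convex_univ.norm_image_sub_le_of_norm_deriv_le
    (fun x _ => hd x) (fun x _ => hK x) (mem_univ _) (mem_univ _)⟩

lemma Om_quad {Ω : ℝ → ℝ} (hΩ : SatisfiesH Ω) (h0 : deriv Ω (π / 2) = 0) :
    ∃ K, 0 ≤ K ∧ ∀ θ, |Ω θ - Ω (π / 2)| ≤ K * |θ - π / 2| ^ 2 := by
  obtain ⟨hc, -, -, hp⟩ := hΩ
  have hd : Differentiable ℝ Ω := hc.differentiable (by simp)
  have hc' : ContDiff ℝ (⊤ : ℕ∞) (deriv Ω) := by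
    have := (contDiff_infty_iff_deriv (f := Ω) (𝕜 := ℝ)).1 hc
    exact this.2
  have hd' : Differentiable ℝ (deriv Ω) := hc'.differentiable (by simp)
  obtain ⟨K, hK0, hK⟩ := periodic_bdd pi_ne_zero (hc'.continuous_deriv (by simp))
    (periodic_deriv (periodic_deriv hp))
  have h1 : ∀ θ, |deriv Ω θ| ≤ K * |θ - π / 2| := fun θ => by
    have := convex_univ.norm_image_sub_le_of_norm_deriv_le
      (fun x _ => hd' x) (fun x _ => hK x) (mem_univ (π / 2)) (mem_univ θ)
    rwa [h0, sub_zero] at this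
  refine ⟨K, hK0, fun θ => ?_⟩
  have := (convex_uIcc (π / 2) θ).norm_image_sub_le_of_norm_deriv_le (f := Ω)
      (C := K * |θ - π / 2|)
      (fun x _ => hd x) (fun x hx => (h1 x).trans ?_) left_mem_uIcc right_mem_uIcc
  · rw [norm_eq_abs, norm_eq_abs] at this
    rw [pow_two, ← mul_assoc]; exact this
  · exact mul_le_mul_of_nonneg_left (abs_sub_left_of_mem_uIcc hx) hK0

lemma arctan_le_self {x : ℝ} (hx : 0 ≤ x) : arctan x ≤ x := by
  simpa [tan_arctan] using le_tan (arctan_nonneg.2 hx) (arctan_lt_pi_div_two x)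

/-- Modulo the period `π`, the angle `arctan(-u)` is within `1/|u|` of `π/2`. -/
lemma exists_angle {Ω : ℝ → ℝ} (hΩ : SatisfiesH Ω) {u : ℝ} (hu : u ≠ 0) :
    ∃ θ, Ω (arctan (-u)) = Ω θ ∧ |θ - π / 2| ≤ |u|⁻¹ := by
  obtain ⟨-, -, -, hp⟩ := hΩ
  rcases lt_or_gt_of_ne hu with h | h
  · refine ⟨_, rfl, ?_⟩
    have h' : 0 < -u := by linarith
    have e := arctan_inv_of_pos h'
    rw [show arctan (-u) - π / 2 = - arctan (-u)⁻¹ by rw [e]; ring, abs_neg, abs_of_neg h,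
      abs_of_nonneg (arctan_nonneg.2 (by positivity))]
    exact arctan_le_self (by positivity)
  · refine ⟨arctan (-u) + π, (hp _).symm, ?_⟩
    have e := arctan_inv_of_pos h
    rw [show arctan (-u) + π - π / 2 = arctan u⁻¹ by rw [e, arctan_neg]; ring, abs_of_pos h,
      abs_of_nonneg (arctan_nonneg.2 (by positivity))]
    exact arctan_le_self (by positivity)

lemma mul_le_ker {s u P x B : ℝ} (hu : u ≠ 0) (hx0 : 0 ≤ x) (hB : 0 ≤ B)
    (hP : P ≤ |u| ^ (-s)) (h1 : x ≤ B) (h2 : x ≤ B * |u|⁻¹) : P * x ≤ B * ker s u := by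
  have h : 0 < |u| := abs_pos.2 hu
  have hq := rpow_nonneg h.le (-s)
  rw [ker, mul_min_of_nonneg _ _ hB]
  refine le_min ?_ ?_
  · calc P * x ≤ |u| ^ (-s) * B := by gcongr
      _ = _ := by ring
  · rw [rpow_sub_one h.ne']
    calc P * x ≤ |u| ^ (-s) * (B * |u|⁻¹) := by gcongr
      _ = _ := by rw [div_eq_mul_inv]; ring

lemma bracket_le {s u : ℝ} (hs0 : 0 < s) (hu : u ≠ 0) :
    (1 + u ^ 2) ^ (-s / 2) ≤ |u| ^ (-s) := by linarith [bracket_sub_nonneg hs0 hu]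

/-- The angular part of the profile is integrable at infinity because `Ω` is Lipschitz. -/
lemma bracket_mul_le_ker {s : ℝ} (hs0 : 0 < s) {Ω : ℝ → ℝ} (hΩ : SatisfiesH Ω) :
    ∃ A, 0 ≤ A ∧ ∀ u, u ≠ 0 →
      |(1 + u ^ 2) ^ (-s / 2) * (Ω (arctan (-u)) - Ω (π / 2))| ≤ A * ker s u := by
  obtain ⟨K, hK0, hK⟩ := Om_lip hΩ
  obtain ⟨M, hM0, hM⟩ := periodic_bdd pi_ne_zero hΩ.1.continuous hΩ.2.2.2
  refine ⟨2 * M + K, by positivity, fun u hu => ?_⟩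
  rw [abs_mul, abs_of_nonneg (by positivity)]
  refine mul_le_ker hu (abs_nonneg _) (by positivity) (bracket_le hs0 hu) ?_ ?_
  · have := abs_sub (Ω (arctan (-u))) (Ω (π / 2))
    linarith [hM (arctan (-u)), hM (π / 2)]
  · obtain ⟨θ, e, hθ⟩ := exists_angle hΩ hu
    rw [e]
    refine (hK θ).trans ?_
    gcongr
    linarith

lemma prof_split (s : ℝ) (Ω : ℝ → ℝ) (u : ℝ) : prof s Ω u =
    ((1 + u ^ 2) ^ (-s / 2) - |u| ^ (-s)) * Ω (π / 2) +
      (1 + u ^ 2) ^ (-s / 2) * (Ω (arctan (-u)) - Ω (π / 2)) := by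
  unfold prof; ring

lemma prof_le_ker {s : ℝ} (hs0 : 0 < s) (hs1 : s < 1) {Ω : ℝ → ℝ} (hΩ : SatisfiesH Ω) :
    ∃ A, 0 ≤ A ∧ ∀ u, u ≠ 0 → |prof s Ω u| ≤ A * ker s u := by
  obtain ⟨A, hA0, hA⟩ := bracket_mul_le_ker hs0 hΩ
  have hpos := hΩ.2.2.1 (π / 2)
  refine ⟨Ω (π / 2) + A, by positivity, fun u hu => ?_⟩
  rw [prof_split, add_mul]
  refine (abs_add_le _ _).trans (add_le_add ?_ (hA u hu))
  rw [abs_mul, abs_sub_comm, abs_of_nonneg (bracket_sub_nonneg hs0 hu), abs_of_pos hpos, mul_comm]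
  gcongr
  exact bracket_sub_le_ker hs0 hs1 hu

/-- If `Ω'(π/2) = 0`, the profile decays like `|u|^{-s-2}`, one order faster than in general. -/
lemma abs_mul_prof_le_ker {s : ℝ} (hs0 : 0 < s) (hs1 : s < 1) {Ω : ℝ → ℝ} (hΩ : SatisfiesH Ω)
    (h0 : deriv Ω (π / 2) = 0) :
    ∃ A, 0 ≤ A ∧ ∀ u, u ≠ 0 → |u| * |prof s Ω u| ≤ A * ker s u := by
  obtain ⟨K, hK0, hK⟩ := Om_lip hΩ
  obtain ⟨K', hK0', hK'⟩ := Om_quad hΩ h0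
  have hpos := hΩ.2.2.1 (π / 2)
  refine ⟨Ω (π / 2) + (K + K'), by positivity, fun u hu => ?_⟩
  have h : 0 < |u| := abs_pos.2 hu
  rw [prof_split, add_mul]
  have hk := bracket_sub_nonneg hs0 hu
  calc _ ≤ |u| * (|((1 + u ^ 2) ^ (-s / 2) - |u| ^ (-s)) * Ω (π / 2)| +
        |(1 + u ^ 2) ^ (-s / 2) * (Ω (arctan (-u)) - Ω (π / 2))|) := by
        gcongr; exact abs_add_le _ _
    _ = Ω (π / 2) * (|u| * (|u| ^ (-s) - (1 + u ^ 2) ^ (-s / 2))) +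
        (1 + u ^ 2) ^ (-s / 2) * (|u| * |Ω (arctan (-u)) - Ω (π / 2)|) := by
        rw [abs_mul, abs_sub_comm, abs_of_nonneg hk, abs_of_pos hpos, abs_mul,
          abs_of_nonneg (a := (1 + u ^ 2) ^ (-s / 2)) (by positivity)]
        ring
    _ ≤ _ := by
        refine add_le_add ?_ ?_
        · gcongr
          refine le_min ?_ ?_
          · have := (bracket_sub_le_ker hs0 hs1 hu).trans (min_le_right _ _)
            rw [rpow_sub_one h.ne', le_div_iff₀ h] at this
            linarith
          · have := bracket_sub_le hs0 hs1 hu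
            rw [rpow_sub_one h.ne']
            calc _ ≤ |u| * (|u| ^ (-s) * (|u| ^ 2)⁻¹) := by gcongr
              _ = _ := by field_simp
        · obtain ⟨θ, e, hθ⟩ := exists_angle hΩ hu
          rw [e]
          refine mul_le_ker hu (by positivity) (by positivity) (bracket_le hs0 hu) ?_ ?_
          · calc _ ≤ |u| * (K * |u|⁻¹) := by
                  gcongr
                  exact (hK θ).trans (by gcongr)
              _ = K := by field_simp
              _ ≤ _ := by linarith
          · calc _ ≤ |u| * (K' * |u|⁻¹ ^ 2) := by
                  gcongr
                  exact (hK' θ).trans (by gcongr)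
              _ = K' * |u|⁻¹ := by field_simp
              _ ≤ _ := by gcongr; linarith

/-! ### The integral of the profile -/

lemma ae_ne_zero : ∀ᵐ u : ℝ, u ≠ 0 := by simp [ae_iff]

lemma prof_measurable (s : ℝ) {Ω : ℝ → ℝ} (hΩ : SatisfiesH Ω) : Measurable (prof s Ω) := by
  have := hΩ.1.continuous.measurable
  unfold prof
  fun_prop

lemma prof_integrable {s : ℝ} (hs0 : 0 < s) (hs1 : s < 1) {Ω : ℝ → ℝ} (hΩ : SatisfiesH Ω) :
    Integrable (prof s Ω) := by
  obtain ⟨A, hA0, hA⟩ := prof_le_ker hs0 hs1 hΩ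
  refine ((ker_integrable hs0 hs1).const_mul A).mono'
    (prof_measurable s hΩ).aestronglyMeasurable ?_
  filter_upwards [ae_ne_zero] with u hu using hA u hu

lemma bracket_mul_integrable {s : ℝ} (hs0 : 0 < s) (hs1 : s < 1) {Ω : ℝ → ℝ}
    (hΩ : SatisfiesH Ω) :
    Integrable fun u => (1 + u ^ 2) ^ (-s / 2) * (Ω (arctan (-u)) - Ω (π / 2)) := by
  obtain ⟨A, hA0, hA⟩ := bracket_mul_le_ker hs0 hΩ
  have := hΩ.1.continuous.measurable
  refine ((ker_integrable hs0 hs1).const_mul A).mono' (by fun_prop) ?_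
  filter_upwards [ae_ne_zero] with u hu using hA u hu

/-- The substitution `u = -tan θ`, together with the `π`-periodicity of the integrand in `θ`. -/
lemma integral_bracket_mul {s : ℝ} (hs0 : 0 < s) (hs1 : s < 1) {Ω : ℝ → ℝ}
    (hΩ : SatisfiesH Ω) :
    ∫ u, (1 + u ^ 2) ^ (-s / 2) * (Ω (arctan (-u)) - Ω (π / 2)) =
      1 / 2 * ∫ θ in (-π)..π, |cos (0 - θ)| ^ (-2 + s) * (Ω θ - Ω (0 + π / 2)) := by
  have hi := (bracket_mul_integrable hs0 hs1 hΩ).comp_neg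
  rw [← integral_neg_eq_self]
  simp only [neg_neg, neg_sq, zero_sub, cos_neg, zero_add] at hi ⊢
  set h : ℝ → ℝ := fun θ => |cos θ| ^ (-2 + s) * (Ω θ - Ω (π / 2)) with hh
  have hper : Function.Periodic h π := fun θ => by
    simp only [hh, cos_add_pi, abs_neg, hΩ.2.2.2 θ]
  have hd : ∀ θ ∈ Ioo (-(π / 2)) (π / 2),
      HasDerivWithinAt tan (1 / cos θ ^ 2) (Ioo (-(π / 2)) (π / 2)) θ :=
    fun θ hθ => (hasDerivAt_tan_of_mem_Ioo hθ).hasDerivWithinAt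
  have hinj : InjOn tan (Ioo (-(π / 2)) (π / 2)) := injOn_tan
  have hcongr : ∀ θ ∈ Ioo (-(π / 2)) (π / 2), |1 / cos θ ^ 2| •
      ((1 + tan θ ^ 2) ^ (-s / 2) * (Ω (arctan (tan θ)) - Ω (π / 2))) = h θ := by
    intro θ hθ
    have hc := cos_pos_of_mem_Ioo hθ
    rw [arctan_tan hθ.1 hθ.2, smul_eq_mul, ← mul_assoc]
    simp only [hh]
    congr 1
    have e : 1 + tan θ ^ 2 = (cos θ ^ 2)⁻¹ := by
      rw [tan_eq_sin_div_cos]; field_simp; linarith [sin_sq_add_cos_sq θ]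
    rw [e, abs_of_pos hc, abs_of_pos (by positivity), ← rpow_natCast, ← rpow_neg hc.le,
      ← rpow_mul hc.le, one_div, ← rpow_neg hc.le, ← rpow_add hc]
    congr 1; push_cast; ring
  have hint : IntervalIntegrable h volume (-(π / 2)) (-(π / 2) + π) := by
    rw [show -(π / 2) + π = π / 2 by ring, intervalIntegrable_iff_integrableOn_Ioo_of_le
      (by linarith [pi_pos])]
    rw [← integrableOn_univ, ← image_tan_Ioo,
      integrableOn_image_iff_integrableOn_abs_deriv_smul measurableSet_Ioo hd hinj] at hi
    exact hi.congr_fun hcongr measurableSet_Ioo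
  have hint2 := hper.intervalIntegrable pi_ne_zero hint
  rw [← setIntegral_univ, ← image_tan_Ioo,
    integral_image_eq_integral_abs_deriv_smul measurableSet_Ioo hd hinj,
    setIntegral_congr_fun measurableSet_Ioo hcongr, ← integral_Ioc_eq_integral_Ioo,
    ← intervalIntegral.integral_of_le (by linarith [pi_pos]),
    ← intervalIntegral.integral_add_adjacent_intervals (hint2 (-π) 0) (hint2 0 π)]
  have e1 := hper.intervalIntegral_add_eq (-π) (-(π / 2))
  have e2 := hper.intervalIntegral_add_eq 0 (-(π / 2))
  rw [show -(π / 2) + π = π / 2 by ring] at e1 e2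
  rw [neg_add_cancel] at e1
  rw [zero_add] at e2
  rw [e1, e2]; ring

lemma tauC_ne_zero {s : ℝ} (hs0 : 0 < s) (hs1 : s < 1) : tauC (2 - s) ≠ 0 := by
  have p4 : 0 < Gamma (2 - s) := Gamma_pos_of_pos (by linarith)
  have p5 : 0 < cos (s * π / 2) :=
    cos_pos_of_mem_Ioo ⟨by nlinarith [pi_pos], by nlinarith [pi_pos]⟩
  have hc : cos ((2 - s) * π / 2) = - cos (s * π / 2) := by
    rw [show (2 - s) * π / 2 = π - s * π / 2 by ring, cos_pi_sub]
  unfold tauC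
  rw [hc]
  have : (0 : ℝ) < (2 * π) ^ (-(2 - s)) := by positivity
  exact mul_ne_zero (mul_ne_zero this.ne' p4.ne') (neg_ne_zero.2 p5.ne')

lemma integral_prof {s : ℝ} (hs0 : 0 < s) (hs1 : s < 1) {Ω : ℝ → ℝ} (hΩ : SatisfiesH Ω) :
    ∫ u, prof s Ω u = 1 / (2 * tauC (2 - s)) * Omt s Ω 0 := by
  have ht := tauC_ne_zero hs0 hs1
  simp only [prof_split]
  rw [integral_add ((bracket_integrable hs0 hs1).mul_const _) (bracket_mul_integrable hs0 hs1 hΩ),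
    integral_mul_const, integral_bracket_sub_eq hs0 hs1, integral_bracket_mul hs0 hs1 hΩ, Omt,
    zero_add]
  field_simp
  ring

/-! ### The potential of `rhoPsi` and the error term -/

lemma integral_rhoPsi {ψ : ℝ → ℝ} (hcont : Continuous ψ) (hpos : ∀ t, 0 ≤ ψ t)
    (f : ℝ × ℝ → ℝ) : ∫ y, f y ∂(rhoPsi ψ) = ∫ t, ψ t * f (0, t) := by
  have hm := hcont.measurable
  unfold rhoPsi
  rw [(measurableEmbedding_prodMk_left (0 : ℝ)).integral_map,
    integral_withDensity_eq_integral_toReal_smul (by fun_prop) (by simp)]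
  simp only [ENNReal.toReal_ofReal (hpos _), smul_eq_mul]

lemma Wr_pos (s : ℝ) (Ω : ℝ → ℝ) {ε : ℝ} (hε : 0 < ε) (t : ℝ) :
    Wr s Ω (((ε, 0) : ℝ × ℝ) - (0, t)) =
      ε ^ (-s) * ((1 + (t / ε) ^ 2) ^ (-s / 2) * Ω (arctan (-(t / ε)))) + (ε ^ 2 + t ^ 2) := by
  have e : ((ε, 0) : ℝ × ℝ) - (0, t) = (ε, -t) := by simp
  have hang : ang (ε, -t) = arctan (-(t / ε)) := by
    have h1 : Complex.arg ⟨ε, -t⟩ = arctan (-(t / ε)) := by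
      set z : ℂ := ⟨ε, -t⟩
      have hz : tan (Complex.arg z) = -(t / ε) := by
        rw [Complex.tan_arg]; simp [z, neg_div]
      have hlt : |Complex.arg z| < π / 2 := Complex.abs_arg_lt_pi_div_two_iff.2 (Or.inl hε)
      rw [← hz, arctan_tan (abs_lt.1 hlt).1 (abs_lt.1 hlt).2]
    unfold ang
    simp only [h1]
    rw [if_neg]
    have := arctan_lt_pi_div_two (-(t / ε))
    intro h; linarith [pi_pos]
  have hn : nrm (ε, -t) ^ 2 = ε ^ 2 + t ^ 2 := by
    unfold nrm; rw [sq_sqrt (by positivity)]; simp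
  have hn' : nrm (ε, -t) ^ (-s) = ε ^ (-s) * (1 + (t / ε) ^ 2) ^ (-s / 2) := by
    have h0 : 0 ≤ nrm (ε, -t) := sqrt_nonneg _
    have h2 : ε ^ (-s) = (ε ^ 2) ^ (-s / 2) := by
      rw [← rpow_natCast, ← rpow_mul hε.le]; congr 1; push_cast; ring
    have h3 : nrm (ε, -t) ^ (-s) = (nrm (ε, -t) ^ 2) ^ (-s / 2) := by
      rw [← rpow_natCast, ← rpow_mul h0]; congr 1; push_cast; ring
    rw [h3, h2, hn, ← mul_rpow (by positivity) (by positivity)]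
    congr 1; field_simp
  rw [e, Wr, hang, hn, hn']; ring

/-- Valid also at `t = 0`, where both sides vanish because `0 ^ (-s) = 0`. -/
lemma Wr_zero {s : ℝ} (hs0 : 0 < s) {Ω : ℝ → ℝ} (hΩ : SatisfiesH Ω) (t : ℝ) :
    Wr s Ω (((0, 0) : ℝ × ℝ) - (0, t)) = |t| ^ (-s) * Ω (π / 2) + t ^ 2 := by
  have e : ((0, 0) : ℝ × ℝ) - (0, t) = (0, -t) := by simp
  have hn : nrm (0, -t) = |t| := by simp [nrm, sqrt_sq_eq_abs]
  rw [e, Wr, hn, sq_abs]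
  congr 1
  rcases eq_or_ne t 0 with rfl | ht
  · simp [zero_rpow (neg_ne_zero.2 hs0.ne')]
  congr 1
  rcases lt_or_gt_of_ne ht with h | h
  · have h1 : Complex.arg ⟨0, -t⟩ = π / 2 := Complex.arg_eq_pi_div_two_iff.2 ⟨rfl, by simpa using h⟩
    simp only [ang, h1]
    rw [if_neg (by linarith [pi_pos])]
  · have h1 : Complex.arg ⟨0, -t⟩ = -(π / 2) :=
      Complex.arg_eq_neg_pi_div_two_iff.2 ⟨rfl, by simpa using h⟩
    simp only [ang, h1]
    rw [if_neg (by linarith [pi_pos]), ← hΩ.2.2.2 (-(π / 2))]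
    congr 1; ring

lemma Wr_diff {s : ℝ} (hs0 : 0 < s) {Ω : ℝ → ℝ} (hΩ : SatisfiesH Ω) {ε : ℝ} (hε : 0 < ε)
    (t : ℝ) : Wr s Ω (((ε, 0) : ℝ × ℝ) - (0, t)) - Wr s Ω (((0, 0) : ℝ × ℝ) - (0, t)) =
      ε ^ (-s) * prof s Ω (t / ε) + ε ^ 2 := by
  rw [Wr_pos s Ω hε, Wr_zero hs0 hΩ, prof, abs_div, abs_of_pos hε,
    div_rpow (abs_nonneg _) hε.le]
  have : 0 < ε ^ (-s) := by positivity
  field_simp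
  ring

lemma lip_at_zero {ψ : ℝ → ℝ} (hcont : Continuous ψ) (hcs : HasCompactSupport ψ)
    (hC1 : ∃ U ∈ 𝓝 (0 : ℝ), ContDiffOn ℝ 1 ψ U) :
    ∃ L, 0 ≤ L ∧ ∀ t, |ψ t - ψ 0| ≤ L ∧ |ψ t - ψ 0| ≤ L * |t| := by
  obtain ⟨U, hU, hψ⟩ := hC1
  have hd : DifferentiableAt ℝ ψ 0 := (hψ.contDiffAt hU).differentiableAt (by simp)
  obtain ⟨c, hc0, hc⟩ := hd.hasFDerivAt.isBigO_sub.exists_nonneg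
  obtain ⟨δ, hδ, hball⟩ := Metric.eventually_nhds_iff.1 hc.bound
  obtain ⟨M, hM⟩ := hcont.bounded_above_of_compact_support hcs
  have hM0 : 0 ≤ M := (norm_nonneg _).trans (hM 0)
  have h2M : ∀ t, |ψ t - ψ 0| ≤ 2 * M := fun t => by
    have := norm_sub_le (ψ t) (ψ 0)
    rw [norm_eq_abs] at this
    linarith [hM t, hM 0]
  refine ⟨2 * M + c + 2 * M / δ, by positivity, fun t => ⟨?_, ?_⟩⟩
  · refine (h2M t).trans ?_
    have : 0 ≤ 2 * M / δ := by positivity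
    linarith
  · rcases lt_or_ge |t| δ with h | h
    · have := hball (y := t) (by simpa using h)
      simp only [norm_eq_abs, sub_zero] at this
      refine this.trans ?_
      gcongr
      have : 0 ≤ 2 * M / δ := by positivity
      linarith
    · calc _ ≤ 2 * M := h2M t
        _ = 2 * M / δ * δ := by field_simp
        _ ≤ 2 * M / δ * |t| := by gcongr
        _ ≤ _ := by gcongr; linarith

/-- The exact error: the leading term corresponds to replacing `ψ(t)` by `ψ(0)`, since
`∫ F(t/ε) dt = ε ∫ F`. -/
lemma error_eq {s : ℝ} (hs0 : 0 < s) (hs1 : s < 1) {Ω : ℝ → ℝ} (hΩ : SatisfiesH Ω)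
    {ψ : ℝ → ℝ} (hcont : Continuous ψ) (hcs : HasCompactSupport ψ) (hpos : ∀ t, 0 ≤ ψ t)
    (hint : (∫ t, ψ t) = 1) {ε : ℝ} (hε : 0 < ε) :
    (∫ y, Wr s Ω (((ε, 0) : ℝ × ℝ) - y) ∂(rhoPsi ψ)) -
          (∫ y, Wr s Ω (((0, 0) : ℝ × ℝ) - y) ∂(rhoPsi ψ)) -
          1 / (2 * tauC (2 - s)) * Omt s Ω 0 * ψ 0 * ε ^ (1 - s) =
      ε ^ (-s) * (∫ t, (ψ t - ψ 0) * prof s Ω (t / ε)) + ε ^ 2 := by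
  have hψi : Integrable ψ := hcont.integrable_of_hasCompactSupport hcs
  have hpi : Integrable fun t => prof s Ω (t / ε) :=
    (prof_integrable hs0 hs1 hΩ).comp_div hε.ne'
  obtain ⟨M, hM⟩ := hcont.bounded_above_of_compact_support hcs
  have hψp : Integrable fun t => ψ t * prof s Ω (t / ε) :=
    hpi.bdd_mul hcont.aestronglyMeasurable (ae_of_all _ hM)
  have hΩc := hΩ.1.continuous
  have hWε : Integrable fun t => ψ t * Wr s Ω (((ε, 0) : ℝ × ℝ) - (0, t)) := by
    simp only [Wr_pos s Ω hε]
    have h1 : Continuous fun t : ℝ => (1 + (t / ε) ^ 2) ^ (-s / 2) :=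
      Continuous.rpow_const (by fun_prop) (fun u => Or.inl (by positivity))
    apply Continuous.integrable_of_hasCompactSupport
    · fun_prop
    · exact hcs.mul_right
  -- integrability of the potential at the origin is inherited from the three other terms
  have hdiff : ∀ t, ψ t * Wr s Ω (((0, 0) : ℝ × ℝ) - (0, t)) =
      ψ t * Wr s Ω (((ε, 0) : ℝ × ℝ) - (0, t)) -
        (ε ^ (-s) * (ψ t * prof s Ω (t / ε)) + ε ^ 2 * ψ t) := fun t => by
    linear_combination (-ψ t) * Wr_diff hs0 hΩ hε t
  have hr : Integrable fun t => ε ^ (-s) * (ψ t * prof s Ω (t / ε)) + ε ^ 2 * ψ t :=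
    (hψp.const_mul (ε ^ (-s))).add (hψi.const_mul (ε ^ 2))
  have hscale : ∫ t, prof s Ω (t / ε) = ε * ∫ u, prof s Ω u := by
    rw [Measure.integral_comp_div, abs_of_pos hε, smul_eq_mul]
  rw [integral_rhoPsi hcont hpos, integral_rhoPsi hcont hpos]
  simp only [hdiff, sub_mul]
  rw [integral_sub hWε hr, integral_add (hψp.const_mul _) (hψi.const_mul _), integral_const_mul,
    integral_const_mul, hint, integral_sub hψp (hpi.const_mul _), integral_const_mul, hscale,
    integral_prof hs0 hs1 hΩ, show 1 - s = -s + 1 by ring, rpow_add_one hε.ne']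
  ring

/-- Bounds the error of `error_eq` by the integral of a majorant `g` of its integrand. -/
lemma error_bound {s : ℝ} {Ω : ℝ → ℝ} {ψ : ℝ → ℝ} {ε : ℝ} {g : ℝ → ℝ} (hε : 0 < ε)
    (hg : Integrable g)
    (h : ∀ t, t ≠ 0 → |ψ t - ψ 0| * |prof s Ω (t / ε)| ≤ g t) :
    |ε ^ (-s) * (∫ t, (ψ t - ψ 0) * prof s Ω (t / ε)) + ε ^ 2| ≤
      ε ^ (-s) * (∫ t, g t) + ε ^ 2 := by
  refine (abs_add_le _ _).trans ?_
  rw [abs_mul, abs_of_pos (rpow_pos_of_pos hε (-s)), abs_of_nonneg (sq_nonneg ε)]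
  gcongr
  rw [← norm_eq_abs]
  refine norm_integral_le_of_norm_le hg ?_
  filter_upwards [ae_ne_zero] with t ht
  rw [norm_mul]
  exact h t ht

/-! ### The expansion -/

/-- asymptotic expansion of the potential generated by a vertical
distribution `ρ(x) = ψ(x₂) δ(x₁)`:
`(W*ρ)(ε,0) - (W*ρ)(0,0) = (1/(2τ_{2-s})) Ω̃(0) ψ(0) ε^{1-s} + O(ε)`, with an improved
error `O(ε^{2-s})` when `Ω` has a local minimum at `π/2`. -/
theorem statement13 (s : ℝ) (hs0 : 0 < s) (hs1 : s < 1) (Ω : ℝ → ℝ) (hΩ : SatisfiesH Ω)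
    (ψ : ℝ → ℝ) (hcont : Continuous ψ) (hcs : HasCompactSupport ψ) (hpos : ∀ t, 0 ≤ ψ t)
    (hint : (∫ t, ψ t) = 1) (hC1 : ∃ U ∈ 𝓝 (0 : ℝ), ContDiffOn ℝ 1 ψ U) :
    (∃ C ε₀ : ℝ, 0 < C ∧ 0 < ε₀ ∧ ∀ ε : ℝ, 0 < ε → ε < ε₀ →
      |(∫ y, Wr s Ω (((ε, 0) : ℝ × ℝ) - y) ∂(rhoPsi ψ)) -
          (∫ y, Wr s Ω (((0, 0) : ℝ × ℝ) - y) ∂(rhoPsi ψ)) -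
          1 / (2 * tauC (2 - s)) * Omt s Ω 0 * ψ 0 * ε ^ (1 - s)| ≤ C * ε) ∧
    (IsLocalMin Ω (π / 2) →
      ∃ C ε₀ : ℝ, 0 < C ∧ 0 < ε₀ ∧ ∀ ε : ℝ, 0 < ε → ε < ε₀ →
        |(∫ y, Wr s Ω (((ε, 0) : ℝ × ℝ) - y) ∂(rhoPsi ψ)) -
            (∫ y, Wr s Ω (((0, 0) : ℝ × ℝ) - y) ∂(rhoPsi ψ)) -
            1 / (2 * tauC (2 - s)) * Omt s Ω 0 * ψ 0 * ε ^ (1 - s)| ≤ C * ε ^ (2 - s)) := by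
  obtain ⟨L, hL0, hL⟩ := lip_at_zero hcont hcs hC1
  have hk := ker_integrable hs0 hs1
  have hk0 : 0 ≤ ∫ u, ker s u := integral_nonneg (ker_nonneg s)
  constructor
  · obtain ⟨A, hA0, hA⟩ := prof_le_ker hs0 hs1 hΩ
    refine ⟨L * A * (∫ u, ker s u) + 1, 1, by positivity, one_pos, fun ε hε hε1 => ?_⟩
    rw [error_eq hs0 hs1 hΩ hcont hcs hpos hint hε]
    refine (error_bound hε (hk.const_mul (L * A * ε ^ (s + 1))) fun t ht => ?_).trans ?_
    · have h : 0 < |t| := abs_pos.2 ht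
      have h1 : |prof s Ω (t / ε)| ≤ A * (ε ^ (s + 1) * |t| ^ (-s - 1)) := by
        refine (hA _ (div_ne_zero ht hε.ne')).trans ?_
        gcongr
        refine (min_le_right _ _).trans ?_
        rw [abs_div, abs_of_pos hε, div_rpow h.le hε.le, show -s - 1 = -(s + 1) by ring,
          rpow_neg hε.le, div_inv_eq_mul, mul_comm]
      have h2 : |ψ t - ψ 0| * |t| ^ (-s - 1) ≤ L * ker s t := by
        rw [ker, mul_min_of_nonneg _ _ hL0]
        refine le_min ?_ ?_
        · calc _ ≤ L * |t| * |t| ^ (-s - 1) := by gcongr; exact (hL t).2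
            _ = _ := by rw [rpow_sub_one h.ne']; field_simp
        · gcongr; exact (hL t).1
      calc _ ≤ |ψ t - ψ 0| * (A * (ε ^ (s + 1) * |t| ^ (-s - 1))) := by gcongr
        _ = A * ε ^ (s + 1) * (|ψ t - ψ 0| * |t| ^ (-s - 1)) := by ring
        _ ≤ A * ε ^ (s + 1) * (L * ker s t) := by gcongr
        _ = _ := by ring
    · have e : ε ^ (-s) * ε ^ (s + 1) = ε := by
        rw [← rpow_add hε]; simp
      calc _ = L * A * (∫ u, ker s u) * (ε ^ (-s) * ε ^ (s + 1)) + ε * ε := by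
            rw [integral_const_mul]; ring
        _ ≤ L * A * (∫ u, ker s u) * ε + 1 * ε := by rw [e]; gcongr
        _ = _ := by ring
  · intro hmin
    obtain ⟨A, hA0, hA⟩ := abs_mul_prof_le_ker hs0 hs1 hΩ hmin.deriv_eq_zero
    refine ⟨L * A * (∫ u, ker s u) + 1, 1, by positivity, one_pos, fun ε hε hε1 => ?_⟩
    rw [error_eq hs0 hs1 hΩ hcont hcs hpos hint hε]
    refine (error_bound hε ((hk.comp_div hε.ne').const_mul (L * ε * A)) fun t ht => ?_).trans ?_
    · calc _ ≤ L * |t| * |prof s Ω (t / ε)| := by gcongr; exact (hL t).2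
        _ = L * ε * (|t / ε| * |prof s Ω (t / ε)|) := by
          rw [abs_div, abs_of_pos hε]; field_simp
        _ ≤ L * ε * (A * ker s (t / ε)) := by
          exact mul_le_mul_of_nonneg_left (hA _ (div_ne_zero ht hε.ne')) (by positivity)
        _ = _ := by ring
    · have e : ε ^ (2 - s) = ε ^ (-s) * ε ^ 2 := by
        rw [show 2 - s = -s + (2 : ℕ) by push_cast; ring, rpow_add_natCast hε.ne']
      have h1 : ε ^ 2 ≤ ε ^ (2 - s) := by
        rw [e]
        have : 1 ≤ ε ^ (-s) := one_le_rpow_of_pos_of_le_one_of_nonpos hε hε1.le (by linarith)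
        nlinarith [sq_nonneg ε]
      calc _ = L * A * (∫ u, ker s u) * (ε ^ (-s) * ε ^ 2) + ε ^ 2 := by
            rw [integral_const_mul, Measure.integral_comp_div, abs_of_pos hε, smul_eq_mul]; ring
        _ ≤ L * A * (∫ u, ker s u) * ε ^ (2 - s) + ε ^ (2 - s) := by rw [← e]; gcongr
        _ = _ := by ring

end Aniso
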